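/- Equivalence of the maximal rearrangement with a family of Orlicz norms: Let ξ be a nonnegative integrable random variable on a probability space and let t ∈ (0,1]. Define the Luxemburg norm ‖ξ‖_{φ_t} = inf{ λ > 0 : E[ max(ξ/λ − 1, 0) ] ≤ t }, corresponding to the Orlicz function φ_t(x) = max(x−1,0)/t. Then ‖ξ‖_{φ_t} ≤ ξ**(t) ≤ 2·‖ξ‖_{φ_t}. -/

import Mathlib

open MeasureTheory ENNReal

/-- The decreasing rearrangement `ξ*(t) = inf { s ≥ 0 : P(|ξ| > s) ≤ t }`. -/
noncomputable def decRearr {Ω : Type*} [MeasureSpace Ω] (ξ : Ω → ℝ) (t : ℝ) : ℝ :=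
  sInf {s : ℝ | 0 ≤ s ∧ volume {ω | s < |ξ ω|} ≤ ENNReal.ofReal t}

/-- The maximal function `ξ**(t) = (1/t)·∫₀^t ξ*(u) du`. -/
noncomputable def maxRearr {Ω : Type*} [MeasureSpace Ω] (ξ : Ω → ℝ) (t : ℝ) : ℝ :=
  (1 / t) * ∫ u in (0 : ℝ)..t, decRearr ξ u

/-- The Luxemburg norm `‖ξ‖_{φ_t} = inf { λ > 0 : E[max(ξ/λ − 1, 0)] ≤ t }` associated to
the Orlicz function `φ_t(x) = max(x − 1, 0)/t`. -/
noncomputable def luxNorm {Ω : Type*} [MeasureSpace Ω] (ξ : Ω → ℝ) (t : ℝ) : ℝ :=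
  sInf {lam : ℝ | 0 < lam ∧ (∫ ω, max (ξ ω / lam - 1) 0) ≤ t}

/-! Both bounds come from the identity
`t ξ**(t) = min_{a ≥ 0} (t a + E[max(|ξ| - a, 0)])`, whose minimum is attained at `a = ξ*(t)`.
A `λ` admissible for the Luxemburg norm satisfies `E[max(ξ - λ, 0)] ≤ t λ`, so `a = λ` gives
`ξ**(t) ≤ 2 λ`. Conversely, if `λ ≥ ξ**(t)` then `λ ≥ ξ*(t)`, and `a = ξ*(t)` gives
`E[max(ξ - λ, 0)] ≤ t (ξ**(t) - ξ*(t)) ≤ t λ`. The identity itself holds because `|ξ|` and `ξ*`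
are equimeasurable and `ξ* ≤ ξ*(t)` beyond `t`. -/

open Set Filter Topology

theorem volume_setOf_ofReal_lt_inter_Ioi (m : ℝ≥0∞) :
    volume ({u : ℝ | ENNReal.ofReal u < m} ∩ Ioi 0) = m := by
  induction m with
  | top => simp
  | coe m =>
    have : {u : ℝ | ENNReal.ofReal u < m} ∩ Ioi 0 = Ioo 0 (m : ℝ) := by
      ext u
      simp only [mem_inter_iff, mem_ofPred_eq, mem_Ioi, mem_Ioo, and_comm (b := 0 < u)]
      refine and_congr_right fun hu ↦ ?_
      rw [← ENNReal.ofReal_coe_nnreal, ENNReal.ofReal_lt_ofReal_iff_of_nonneg hu.le]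
    rw [this, Real.volume_Ioo, sub_zero, ENNReal.ofReal_coe_nnreal]

section Integrals

variable {α : Type*} [MeasurableSpace α] {μ : Measure α} {f : α → ℝ} {a : ℝ}

theorem tendsto_measure_lt_abs_atTop (hf : Integrable f μ) :
    Tendsto (fun s ↦ μ {x | s < |f x|}) atTop (𝓝 0) := by
  have hlim : Tendsto (fun s ↦ (∫⁻ x, ‖f x‖ₑ ∂μ) / ENNReal.ofReal s) atTop (𝓝 0) := by
    simpa using ENNReal.Tendsto.const_div ENNReal.tendsto_ofReal_atTop
      (Or.inr hf.hasFiniteIntegral.ne)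
  refine tendsto_of_tendsto_of_tendsto_of_le_of_le' tendsto_const_nhds hlim
    (Eventually.of_forall fun _ ↦ zero_le) ?_
  filter_upwards [eventually_gt_atTop 0] with s hs
  calc μ {x | s < |f x|} ≤ μ {x | ENNReal.ofReal s ≤ ‖f x‖ₑ} := by
        refine measure_mono fun x hx ↦ ?_
        rw [mem_ofPred_eq, Real.enorm_eq_ofReal_abs]
        exact ENNReal.ofReal_le_ofReal (le_of_lt hx)
    _ ≤ (∫⁻ x, ‖f x‖ₑ ∂μ) / ENNReal.ofReal s :=
        meas_ge_le_lintegral_div hf.aestronglyMeasurable.enorm (ENNReal.ofReal_pos.2 hs).ne'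
          ENNReal.ofReal_ne_top

theorem lintegral_ofReal_sub_eq_lintegral_meas_lt (hf : AEMeasurable f μ) (a : ℝ) :
    ∫⁻ x, ENNReal.ofReal (f x - a) ∂μ = ∫⁻ s in Ioi 0, μ {x | a + s < f x} := by
  calc ∫⁻ x, ENNReal.ofReal (f x - a) ∂μ = ∫⁻ x, ENNReal.ofReal (max (f x - a) 0) ∂μ := by
        simp
    _ = ∫⁻ s in Ioi 0, μ {x | s < max (f x - a) 0} :=
        lintegral_eq_lintegral_meas_lt μ (ae_of_all _ fun _ ↦ le_max_right _ _)
          ((hf.sub_const a).max aemeasurable_const)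
    _ = ∫⁻ s in Ioi 0, μ {x | a + s < f x} := by
        refine setLIntegral_congr_fun measurableSet_Ioi fun s (hs : 0 < s) ↦ ?_
        simp only [lt_max_iff, hs.not_gt, or_false, lt_sub_iff_add_lt']

theorem integrable_max_sub_zero (hf : Integrable f μ) (ha : 0 ≤ a) :
    Integrable (fun x ↦ max (f x - a) 0) μ := by
  refine hf.mono ((hf.1.sub aestronglyMeasurable_const).sup aestronglyMeasurable_const)
    (ae_of_all _ fun x ↦ ?_)
  rw [Real.norm_of_nonneg (le_max_right _ _), Real.norm_eq_abs]
  exact max_le ((sub_le_self _ ha).trans (le_abs_self _)) (abs_nonneg _)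

theorem integral_max_sub_zero_eq_toReal_lintegral (hf : AEStronglyMeasurable f μ) (a : ℝ) :
    ∫ x, max (f x - a) 0 ∂μ = (∫⁻ x, ENNReal.ofReal (f x - a) ∂μ).toReal := by
  have hmeas : AEStronglyMeasurable (fun x ↦ max (f x - a) 0) μ :=
    (hf.sub aestronglyMeasurable_const).sup aestronglyMeasurable_const
  have hnonneg : 0 ≤ᵐ[μ] fun x ↦ max (f x - a) 0 := ae_of_all _ fun _ ↦ le_max_right _ _
  rw [integral_eq_lintegral_of_nonneg_ae hnonneg hmeas]
  simp

theorem integral_max_div_sub_one_le_iff {l c : ℝ} (hl : 0 < l) :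
    ∫ x, max (f x / l - 1) 0 ∂μ ≤ c ↔ ∫ x, max (f x - l) 0 ∂μ ≤ c * l := by
  have (x : α) : max (f x / l - 1) 0 = max (f x - l) 0 / l := by
    rw [← max_div_div_right hl.le, sub_div, div_self hl.ne', zero_div]
  simp_rw [this]
  rw [integral_div, div_le_iff₀ hl]

end Integrals

section Rearrangement

variable {Ω : Type*} [MeasureSpace Ω] {ξ : Ω → ℝ} {a s t u : ℝ}

theorem decRearr_nonneg (ξ : Ω → ℝ) (u : ℝ) : 0 ≤ decRearr ξ u :=
  Real.sInf_nonneg fun _ hr ↦ hr.1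

theorem decRearr_le (hs : 0 ≤ s) (h : volume {ω | s < |ξ ω|} ≤ ENNReal.ofReal u) :
    decRearr ξ u ≤ s :=
  csInf_le ⟨0, fun _ hr ↦ hr.1⟩ ⟨hs, h⟩

section VanishingDistribution

variable (hξ : Tendsto (fun s ↦ volume {ω | s < |ξ ω|}) atTop (𝓝 0))
include hξ

theorem measure_decRearr_lt_abs_le (hu : 0 < u) :
    volume {ω | decRearr ξ u < |ξ ω|} ≤ ENNReal.ofReal u := by
  have hne : {s : ℝ | 0 ≤ s ∧ volume {ω | s < |ξ ω|} ≤ ENNReal.ofReal u}.Nonempty :=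
    ((eventually_ge_atTop 0).and
      (hξ.eventually_le_const (ENNReal.ofReal_pos.2 hu))).exists
  obtain ⟨r, hr_anti, hr_lim, hr_mem⟩ := exists_seq_tendsto_sInf hne ⟨0, fun _ hr ↦ hr.1⟩
  have hcover : {ω | decRearr ξ u < |ξ ω|} ⊆ ⋃ n, {ω | r n < |ξ ω|} := fun ω hω ↦
    mem_iUnion.2 (hr_lim.eventually_lt_const hω).exists
  have hmono : Monotone fun n ↦ {ω | r n < |ξ ω|} := fun _ _ hmn _ hω ↦
    (hr_anti hmn).trans_lt hω
  calc volume {ω | decRearr ξ u < |ξ ω|} ≤ volume (⋃ n, {ω | r n < |ξ ω|}) :=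
        measure_mono hcover
    _ = ⨆ n, volume {ω | r n < |ξ ω|} := hmono.measure_iUnion
    _ ≤ ENNReal.ofReal u := iSup_le fun n ↦ (hr_mem n).2

theorem lt_decRearr_iff (hu : 0 < u) (hs : 0 ≤ s) :
    s < decRearr ξ u ↔ ENNReal.ofReal u < volume {ω | s < |ξ ω|} := by
  rw [← not_le, ← not_le, not_iff_not]
  refine ⟨fun h ↦ ?_, decRearr_le hs⟩
  exact (measure_mono fun ω hω ↦ h.trans_lt hω).trans (measure_decRearr_lt_abs_le hξ hu)

theorem antitoneOn_decRearr : AntitoneOn (decRearr ξ) (Ioi 0) := fun u hu _ _ huv ↦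
  decRearr_le (decRearr_nonneg ξ u)
    ((measure_decRearr_lt_abs_le hξ hu).trans (ENNReal.ofReal_le_ofReal huv))

theorem aemeasurable_decRearr : AEMeasurable (decRearr ξ) (volume.restrict (Ioi 0)) :=
  aemeasurable_restrict_of_antitoneOn measurableSet_Ioi (antitoneOn_decRearr hξ)

theorem volume_restrict_Ioi_lt_decRearr (hs : 0 ≤ s) :
    volume.restrict (Ioi 0) {u | s < decRearr ξ u} = volume {ω | s < |ξ ω|} := by
  rw [Measure.restrict_apply' measurableSet_Ioi,
    ← volume_setOf_ofReal_lt_inter_Ioi (volume {ω | s < |ξ ω|})]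
  congr 1
  ext u
  exact and_congr_left fun hu ↦ lt_decRearr_iff hξ hu hs

theorem lintegral_ofReal_decRearr_sub (hξm : AEMeasurable ξ) (ha : 0 ≤ a) :
    ∫⁻ u in Ioi 0, ENNReal.ofReal (decRearr ξ u - a) = ∫⁻ ω, ENNReal.ofReal (|ξ ω| - a) := by
  rw [lintegral_ofReal_sub_eq_lintegral_meas_lt (aemeasurable_decRearr hξ),
    lintegral_ofReal_sub_eq_lintegral_meas_lt hξm.abs]
  exact setLIntegral_congr_fun measurableSet_Ioi fun s (hs : 0 < s) ↦
    volume_restrict_Ioi_lt_decRearr hξ (add_nonneg ha hs.le)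

theorem integral_max_decRearr_sub_zero (hξm : AEMeasurable ξ) (ha : 0 ≤ a) :
    ∫ u in Ioi 0, max (decRearr ξ u - a) 0 = ∫ ω, max (|ξ ω| - a) 0 := by
  rw [integral_max_sub_zero_eq_toReal_lintegral (aemeasurable_decRearr hξ).aestronglyMeasurable,
    integral_max_sub_zero_eq_toReal_lintegral hξm.abs.aestronglyMeasurable,
    lintegral_ofReal_decRearr_sub hξ hξm ha]

end VanishingDistribution

theorem integrableOn_decRearr (hξ : Integrable ξ) : IntegrableOn (decRearr ξ) (Ioi 0) := by
  have hdist := tendsto_measure_lt_abs_atTop hξ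
  refine ⟨(aemeasurable_decRearr hdist).aestronglyMeasurable, ?_⟩
  rw [hasFiniteIntegral_iff_ofReal (ae_of_all _ (decRearr_nonneg ξ))]
  simpa using (lintegral_ofReal_decRearr_sub hdist hξ.aemeasurable le_rfl).trans_lt
    (by simpa using hξ.abs.lintegral_lt_top)

theorem mul_maxRearr_eq_setIntegral (ξ : Ω → ℝ) (ht : 0 < t) :
    t * maxRearr ξ t = ∫ u in Ioc 0 t, decRearr ξ u := by
  rw [maxRearr, intervalIntegral.integral_of_le ht.le, ← mul_assoc, mul_one_div_cancel ht.ne',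
    one_mul]

theorem mul_maxRearr_le_add_integral (hξ : Integrable ξ) (ht : 0 < t) (ha : 0 ≤ a) :
    t * maxRearr ξ t ≤ t * a + ∫ ω, max (|ξ ω| - a) 0 := by
  have hint := integrableOn_decRearr hξ
  have hexcess : IntegrableOn (fun u ↦ max (decRearr ξ u - a) 0) (Ioi 0) :=
    integrable_max_sub_zero hint ha
  have hconst : IntegrableOn (fun _ ↦ a) (Ioc 0 t) := integrableOn_const measure_Ioc_lt_top.ne
  have hexcess_Ioc : IntegrableOn (fun u ↦ max (decRearr ξ u - a) 0) (Ioc 0 t) :=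
    hexcess.mono_set Ioc_subset_Ioi_self
  calc t * maxRearr ξ t = ∫ u in Ioc 0 t, decRearr ξ u := mul_maxRearr_eq_setIntegral ξ ht
    _ ≤ ∫ u in Ioc 0 t, (a + max (decRearr ξ u - a) 0) :=
        setIntegral_mono (hint.mono_set Ioc_subset_Ioi_self) (hconst.add hexcess_Ioc)
          fun u ↦ by linarith [le_max_left (decRearr ξ u - a) 0]
    _ = t * a + ∫ u in Ioc 0 t, max (decRearr ξ u - a) 0 := by
        rw [integral_add hconst hexcess_Ioc]
        simp [ht.le]
    _ ≤ t * a + ∫ u in Ioi 0, max (decRearr ξ u - a) 0 := by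
        gcongr t * a + ?_
        exact setIntegral_mono_set hexcess (ae_of_all _ fun _ ↦ le_max_right _ _)
          Ioc_subset_Ioi_self.eventuallyLE
    _ = t * a + ∫ ω, max (|ξ ω| - a) 0 := by
        rw [integral_max_decRearr_sub_zero (tendsto_measure_lt_abs_atTop hξ) hξ.aemeasurable ha]

theorem mul_maxRearr_eq_add_integral (hξ : Integrable ξ) (ht : 0 < t) :
    t * maxRearr ξ t = t * decRearr ξ t + ∫ ω, max (|ξ ω| - decRearr ξ t) 0 := by
  have hdist := tendsto_measure_lt_abs_atTop hξ
  have hanti := antitoneOn_decRearr hdist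
  have htail : ∀ u ∈ Ioi 0 \ Ioc 0 t, max (decRearr ξ u - decRearr ξ t) 0 = 0 := by
    rintro u ⟨hu, hut⟩
    have htu : t ≤ u := le_of_not_ge fun h ↦ hut ⟨hu, h⟩
    exact max_eq_right (sub_nonpos.2 (hanti ht hu htu))
  have hexcess :
      ∫ ω, max (|ξ ω| - decRearr ξ t) 0 = ∫ u in Ioc 0 t, (decRearr ξ u - decRearr ξ t) := by
    rw [← integral_max_decRearr_sub_zero hdist hξ.aemeasurable (decRearr_nonneg ξ t),
      setIntegral_eq_of_subset_of_forall_sdiff_eq_zero measurableSet_Ioi Ioc_subset_Ioi_self htail]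
    exact setIntegral_congr_fun measurableSet_Ioc fun u hu ↦
      max_eq_left (sub_nonneg.2 (hanti hu.1 ht hu.2))
  rw [hexcess, integral_sub ((integrableOn_decRearr hξ).mono_set Ioc_subset_Ioi_self)
    (integrable_const _), mul_maxRearr_eq_setIntegral ξ ht]
  simp [ht.le]

theorem decRearr_le_maxRearr (hξ : Integrable ξ) (ht : 0 < t) : decRearr ξ t ≤ maxRearr ξ t := by
  refine le_of_mul_le_mul_left ?_ ht
  rw [mul_maxRearr_eq_add_integral hξ ht]
  exact le_add_of_nonneg_right (integral_nonneg fun _ ↦ le_max_right _ _)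

theorem integral_max_div_sub_one_le_of_maxRearr_le {l : ℝ} (hξ : Integrable ξ) (ht : 0 < t)
    (hl : 0 < l) (hle : maxRearr ξ t ≤ l) : ∫ ω, max (ξ ω / l - 1) 0 ≤ t := by
  rw [integral_max_div_sub_one_le_iff hl]
  have hstar := (decRearr_le_maxRearr hξ ht).trans hle
  have hstar_nonneg := decRearr_nonneg ξ t
  calc ∫ ω, max (ξ ω - l) 0 ≤ ∫ ω, max (|ξ ω| - decRearr ξ t) 0 := by
        refine integral_mono_of_nonneg (ae_of_all _ fun _ ↦ le_max_right _ _)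
          (integrable_max_sub_zero hξ.abs hstar_nonneg) (ae_of_all _ fun ω ↦ ?_)
        exact max_le_max_right 0 (sub_le_sub (le_abs_self _) hstar)
    _ = t * (maxRearr ξ t - decRearr ξ t) := by
        rw [mul_sub, mul_maxRearr_eq_add_integral hξ ht, add_sub_cancel_left]
    _ ≤ t * l := by gcongr; linarith

theorem luxNorm_le_maxRearr (hξ : Integrable ξ) (ht : 0 < t) : luxNorm ξ t ≤ maxRearr ξ t := by
  have hmax_nonneg := (decRearr_nonneg ξ t).trans (decRearr_le_maxRearr hξ ht)
  refine le_of_forall_gt_imp_ge_of_dense fun l hl ↦ csInf_le ⟨0, fun _ hx ↦ hx.1.le⟩ ?_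
  have hl_pos := hmax_nonneg.trans_lt hl
  exact ⟨hl_pos, integral_max_div_sub_one_le_of_maxRearr_le hξ ht hl_pos hl.le⟩

theorem maxRearr_le_two_mul_of_integral_le {l : ℝ} (hξ_nonneg : 0 ≤ᵐ[volume] ξ)
    (hξ : Integrable ξ) (ht : 0 < t) (hl : 0 < l) (hle : ∫ ω, max (ξ ω / l - 1) 0 ≤ t) :
    maxRearr ξ t ≤ 2 * l := by
  refine le_of_mul_le_mul_left ?_ ht
  calc t * maxRearr ξ t ≤ t * l + ∫ ω, max (|ξ ω| - l) 0 := mul_maxRearr_le_add_integral hξ ht hl.le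
    _ = t * l + ∫ ω, max (ξ ω - l) 0 := by
        congr 1
        refine integral_congr_ae ?_
        filter_upwards [hξ_nonneg] with ω hω
        rw [abs_of_nonneg hω]
    _ ≤ t * l + t * l := by gcongr; exact (integral_max_div_sub_one_le_iff hl).1 hle
    _ = t * (2 * l) := by ring

theorem maxRearr_le_two_mul_luxNorm (hξ_nonneg : 0 ≤ᵐ[volume] ξ) (hξ : Integrable ξ)
    (ht : 0 < t) : maxRearr ξ t ≤ 2 * luxNorm ξ t := by
  have hmax_nonneg := (decRearr_nonneg ξ t).trans (decRearr_le_maxRearr hξ ht)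
  have hne : {l : ℝ | 0 < l ∧ ∫ ω, max (ξ ω / l - 1) 0 ≤ t}.Nonempty := by
    have hl_pos : 0 < maxRearr ξ t + 1 := by positivity
    exact ⟨_, hl_pos, integral_max_div_sub_one_le_of_maxRearr_le hξ ht hl_pos (by simp)⟩
  rw [← div_le_iff₀' two_pos]
  refine le_csInf hne fun l ⟨hl, hle⟩ ↦ (div_le_iff₀' two_pos).2 ?_
  exact maxRearr_le_two_mul_of_integral_le hξ_nonneg hξ ht hl hle

end Rearrangement

theorem luxNorm_le_maxRearr_le_two_luxNorm_general {Ω : Type*} [MeasureSpace Ω] {ξ : Ω → ℝ}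
    (hξ_nonneg : 0 ≤ᵐ[volume] ξ) (hξ : Integrable ξ) {t : ℝ} (ht : 0 < t) :
    luxNorm ξ t ≤ maxRearr ξ t ∧ maxRearr ξ t ≤ 2 * luxNorm ξ t :=
  ⟨luxNorm_le_maxRearr hξ ht, maxRearr_le_two_mul_luxNorm hξ_nonneg hξ ht⟩

/-- Equivalence of the maximal rearrangement with a family of Orlicz (Luxemburg) norms:
`‖ξ‖_{φ_t} ≤ ξ**(t) ≤ 2·‖ξ‖_{φ_t}`. -/
theorem luxNorm_le_maxRearr_le_two_luxNorm {Ω : Type*} [MeasureSpace Ω]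
    (hprob : IsProbabilityMeasure (volume : Measure Ω))
    (ξ : Ω → ℝ) (hξnn : ∀ ω, 0 ≤ ξ ω) (hξ : Integrable ξ volume)
    (t : ℝ) (ht0 : 0 < t) (ht1 : t ≤ 1) :
    luxNorm ξ t ≤ maxRearr ξ t ∧ maxRearr ξ t ≤ 2 * luxNorm ξ t :=
  luxNorm_le_maxRearr_le_two_luxNorm_general (ae_of_all _ hξnn) hξ ht0
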